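/- Let m ≥ 2, d ≥ 1, r ≥ 0 be integers with 2r ≤ d, and let W be a d×d complex matrix whose characteristic polynomial factors as X^{d−2r} · ∏_{k=1}^{r} (X² + λ_k²) with real numbers λ_k > 0. Let 𝒪_{m−1} be the (m−1)d × (m−1)d complex matrix which, as an (m−1)×(m−1) block matrix with d×d blocks, has diagonal blocks 2I, blocks −I − iW directly above the diagonal, blocks −I + iW directly below the diagonal, and zero blocks elsewhere. Then det 𝒪_{m−1} = m^{d−2r} · ∏_{k=1}^{r} ( ((1+λ_k)^m − (1−λ_k)^m)/(2λ_k) )². -/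

import Mathlib

open Complex

/-- The `(m−1)d × (m−1)d` block-tridiagonal matrix `𝒪_{m−1}` with diagonal
blocks `2I`, blocks `−I − iW` directly above the diagonal and `−I + iW`
directly below the diagonal. -/
noncomputable def calO (m d : ℕ) (W : Matrix (Fin d) (Fin d) ℂ) :
    Matrix (Fin (m - 1) × Fin d) (Fin (m - 1) × Fin d) ℂ :=
  fun p q =>
    if p.1 = q.1 then (if p.2 = q.2 then 2 else 0)
    else if (p.1 : ℕ) + 1 = (q.1 : ℕ) then
      -(if p.2 = q.2 then 1 else 0) - Complex.I * W p.2 q.2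
    else if (q.1 : ℕ) + 1 = (p.1 : ℕ) then
      -(if p.2 = q.2 then 1 else 0) + Complex.I * W p.2 q.2
    else 0

open Polynomial in
/-- Tridiagonal Toeplitz matrix. -/
noncomputable def triT {R : Type*} [CommRing R] (a b c : R) (n : ℕ) : Matrix (Fin n) (Fin n) R :=
  fun p q => if p = q then a else if (p : ℕ) + 1 = q then b else if (q : ℕ) + 1 = p then c else 0

theorem triT_det_rec {R : Type*} [CommRing R] (a b c : R) (n : ℕ) :
    (triT a b c (n+2)).det = a * (triT a b c (n+1)).det - b * c * (triT a b c n).det := by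
  have h1 : (triT a b c (n+2)).submatrix Fin.succ Fin.succ = triT a b c (n+1) := by
    ext i j; simp [triT, Fin.ext_iff]
  have h2 : (triT a b c (n+2)).submatrix (Fin.succ ∘ Fin.succ) (Fin.succ ∘ Fin.succ) = triT a b c n := by
    ext i j; simp [triT, Fin.ext_iff]
  rw [Matrix.det_succ_row_zero, Fin.sum_univ_succ, Fin.sum_univ_succ, Finset.sum_eq_zero]
  · have h3 : ((triT a b c (n+2)).submatrix Fin.succ (Fin.succAbove (Fin.succ 0))).det
        = c * (triT a b c n).det := by
      rw [Matrix.det_succ_column_zero, Fin.sum_univ_succ, Finset.sum_eq_zero]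
      · rw [← h2, Matrix.submatrix_submatrix]
        have : (Fin.succAbove (Fin.succ (0 : Fin (n+1))) ∘ Fin.succ) = Fin.succ ∘ Fin.succ := by
          funext i
          simp [Fin.succAbove, Fin.lt_def, Fin.ext_iff]
        rw [this]
        have h0 : Fin.succ ∘ Fin.succAbove (0 : Fin (n+1)) = Fin.succ ∘ Fin.succ := by
          funext i; simp
        rw [h0]
        simp [triT, Fin.succAbove, Fin.lt_def, Fin.ext_iff]
      · intro i _
        simp [triT, Fin.succAbove, Fin.lt_def, Fin.ext_iff]
    rw [h3]
    have h0 : Fin.succAbove (0 : Fin (n+2)) = Fin.succ := by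
      funext i; simp
    rw [h0, h1]
    simp [triT, Fin.ext_iff]
    ring
  · intro i _
    simp [triT, Fin.ext_iff]

theorem triT_det_closed {R : Type*} [CommRing R] (y : R) (n : ℕ) :
    2 * y * (triT 2 (-1 - y) (-1 + y) n).det = (1 + y) ^ (n+1) - (1 - y) ^ (n+1) := by
  induction n using Nat.twoStepInduction with
  | zero => simp; ring
  | one => simp [triT]; ring
  | more n h1 h2 =>
    rw [triT_det_rec]
    linear_combination 2 * h2 - (1 - y^2) * h1

theorem triT_det_zero {R : Type*} [CommRing R] (n : ℕ) :
    (triT (2:R) (-1) (-1) n).det = n + 1 := by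
  induction n using Nat.twoStepInduction with
  | zero => simp
  | one => simp [triT]; norm_num
  | more n h1 h2 =>
    rw [triT_det_rec, h1, h2]; push_cast; ring

theorem triT_map {R S : Type*} [CommRing R] [CommRing S] (f : R →+* S) (a b c : R) (n : ℕ) :
    f (triT a b c n).det = (triT (f a) (f b) (f c) n).det := by
  rw [RingHom.map_det]
  congr 1
  ext i j
  simp [triT, apply_ite f]

open Polynomial in
theorem det_aeval_of_charpoly {d : ℕ} (W : Matrix (Fin d) (Fin d) ℂ) (s : Multiset ℂ)
    (h : W.charpoly = (s.map (fun a => X - C a)).prod) (P : ℂ[X]) :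
    (aeval W P).det = (s.map (fun a => P.eval a)).prod := by
  have hcard : Multiset.card s = d := by
    have := W.charpoly_natDegree_eq_dim
    rw [h, natDegree_multiset_prod_X_sub_C_eq_card] at this
    simpa using this
  have key : ∀ t : Multiset ℂ, (aeval W (t.map (fun a => X - C a)).prod).det
      = (s.map (fun a => ((t.map (fun a => X - C a)).prod).eval a)).prod := by
    intro t
    induction t using Multiset.induction_on with
    | empty => simp
    | cons b t ih =>
      simp only [Multiset.map_cons, Multiset.prod_cons, map_mul, Matrix.det_mul, eval_mul,
        Multiset.prod_map_mul, ih]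
      congr 1
      have e : aeval W (X - C b) = -(Matrix.scalar (Fin d) b - W) := by
        simp [Matrix.algebraMap_eq_diagonal, Pi.algebraMap_def]
      rw [e, Matrix.det_neg, ← Matrix.eval_charpoly, h, eval_multiset_prod, Fintype.card_fin,
        ← hcard, Multiset.map_map, ← Multiset.card_map (fun a => -1 : ℂ → ℂ) s]
      have : (fun a : ℂ => eval a (X - C b)) = fun a => (-1) * (eval b (X - C a)) := by
        funext a; simp
      rw [this, Multiset.prod_map_mul]
      simp [Function.comp_def]
  rw [(IsAlgClosed.splits P).eq_prod_roots, map_mul, Matrix.det_mul, key]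
  simp only [eval_mul, Multiset.prod_map_mul, eval_C, Multiset.map_const', Multiset.prod_replicate,
    hcard]
  congr 1
  simp [Matrix.algebraMap_eq_diagonal]

open Polynomial in
theorem calO_det_eq (m d : ℕ) (W : Matrix (Fin d) (Fin d) ℂ) :
    (calO m d W).det =
      (aeval W (triT (2 : ℂ[X]) (-1 - C I * X) (-1 + C I * X) (m-1)).det).det := by
  have := Matrix.det_det (triT (2 : ℂ[X]) (-1 - C I * X) (-1 + C I * X) (m-1))
    (aeval W : ℂ[X] →ₐ[ℂ] Matrix (Fin d) (Fin d) ℂ).toRingHom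
  refine Eq.trans ?_ this.symm
  congr 1
  ext ⟨p, i⟩ ⟨q, j⟩
  simp only [calO, Matrix.comp_apply, Matrix.map_apply, triT, AlgHom.toRingHom_eq_coe, RingHom.coe_coe]
  have h2 : aeval W (2 : ℂ[X]) = (2:ℂ) • (1 : Matrix (Fin d) (Fin d) ℂ) := by
    rw [two_smul, ← one_add_one_eq_two, map_add, map_one]
  split_ifs <;> simp_all [Matrix.one_apply, Matrix.algebraMap_eq_diagonal, Matrix.diagonal_mul, Matrix.smul_apply]

/-- **Proposition B.3.** If the characteristic polynomial of `W` factors as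
`X^{d−2r} ∏_{k=1}^r (X² + λ_k²)` with `λ_k > 0` real (i.e. the eigenvalues of
`W` are `±iλ_k` together with `0` of multiplicity `d − 2r`), then
`det 𝒪_{m−1} = m^{d−2r} ∏_{k=1}^r (((1+λ_k)^m − (1−λ_k)^m)/(2λ_k))²`. -/
theorem det_calO_eigenvalues (m d r : ℕ) (hm : 2 ≤ m) (hd : 1 ≤ d)
    (hr : 2 * r ≤ d) (W : Matrix (Fin d) (Fin d) ℂ)
    (lam : Fin r → ℝ) (hlam : ∀ k, 0 < lam k)
    (hchar : W.charpoly =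
      Polynomial.X ^ (d - 2 * r) *
        ∏ k : Fin r, (Polynomial.X ^ 2 + Polynomial.C ((lam k : ℂ) ^ 2))) :
    (calO m d W).det =
      (m : ℂ) ^ (d - 2 * r) *
        ∏ k : Fin r,
          ((((1 + (lam k : ℂ)) ^ m - (1 - (lam k : ℂ)) ^ m) /
              (2 * (lam k : ℂ))) ^ 2) := by
  classical
  set s : Multiset ℂ := Multiset.replicate (d - 2 * r) 0 +
    (Finset.univ.val.map (fun k : Fin r => I * (lam k : ℂ)) +
     Finset.univ.val.map (fun k : Fin r => -(I * (lam k : ℂ)))) with hs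
  have h : W.charpoly = (s.map (fun a => Polynomial.X - Polynomial.C a)).prod := by
    rw [hchar, hs]
    simp only [Multiset.map_add, Multiset.prod_add, Multiset.map_replicate,
      Multiset.prod_replicate, Multiset.map_map, Function.comp_def]
    rw [← Multiset.prod_map_mul]
    congr 1
    · simp
    · refine Finset.prod_congr rfl fun k _ => ?_
      have : (lam k : ℂ) ^ 2 = - (I * lam k) * (I * lam k) := by
        linear_combination ((lam k : ℂ)^2) * I_sq
      rw [this]
      simp only [Polynomial.C_mul, Polynomial.C_neg]
      ring
  rw [calO_det_eq, det_aeval_of_charpoly W s h, hs]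
  simp only [Multiset.map_add, Multiset.prod_add, Multiset.map_replicate,
      Multiset.prod_replicate, Multiset.map_map, Function.comp_def]
  rw [← Multiset.prod_map_mul]
  have ev : ∀ a : ℂ, Polynomial.eval a (triT (2 : Polynomial ℂ) (-1 - Polynomial.C I * Polynomial.X)
      (-1 + Polynomial.C I * Polynomial.X) (m-1)).det
      = (triT 2 (-1 - I * a) (-1 + I * a) (m-1)).det := by
    intro a
    rw [← Polynomial.coe_evalRingHom, triT_map]
    simp
  have hm1 : m - 1 + 1 = m := by omega
  congr 1
  · rw [ev]
    simp only [mul_zero, sub_zero, add_zero]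
    rw [triT_det_zero]
    congr 1
    exact_mod_cast hm1
  · refine Finset.prod_congr rfl fun k _ => ?_
    have hk : (lam k : ℂ) ≠ 0 := by exact_mod_cast (hlam k).ne'
    have e1 : I * (I * (lam k : ℂ)) = - lam k := by
      linear_combination (lam k : ℂ) * I_sq
    have e2 : I * (-(I * (lam k : ℂ))) = lam k := by
      linear_combination -(lam k : ℂ) * I_sq
    rw [ev, ev, e1, e2]
    have c1 := triT_det_closed (-(lam k : ℂ)) (m-1)
    have c2 := triT_det_closed ((lam k : ℂ)) (m-1)
    rw [hm1] at c1 c2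
    have h2 : (2 * (lam k : ℂ)) ≠ 0 := by simpa using hk
    rw [sq]
    congr 1
    · rw [eq_div_iff h2]
      linear_combination -c1
    · rw [eq_div_iff h2]
      linear_combination c2
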